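/- Let (X_i, Y_i), i ≥ 1, be an i.i.d. sequence with X_i ∈ ℝ^p and Y_i ∈ ℝ, and let Ψ : ℝ → ℝ^H be measurable. Define K = (X − E[X])(Ψ(Y) − E[Ψ(Y)])ᵀ, C = E[K], Ĉ = (1/n)Σ_i K̂_i with K̂_i = (X_i − X̄)(Ψ_i − Ψ̄)ᵀ (X̄, Ψ̄ the sample means, Ψ_i = Ψ(Y_i)), and the weighted-bootstrap terms K*_i = w_i (K̂_i − (1/n)Σ_j K̂_j), where (w_i) is an i.i.d. sequence of real random variables with mean 0 and variance 1, independent of the data. Let V = Var(vec(K)) and V* = (1/n) Σ_i vec(K*_i − K̄*) vec(K*_i − K̄*)ᵀ with K̄* = (1/n)Σ_i K*_i. If E[‖X‖²] < ∞, E[‖Ψ(Y)‖²] < ∞ and E[‖K‖_F⁴] < ∞, then almost surely the conditional law of n^{1/2} K̄* given the data converges weakly to the asymptotic law of n^{1/2}(Ĉ − C) (which is N(0, V)), and V* → V in probability conditionally almost surely. -/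

import Mathlib

open MeasureTheory ProbabilityTheory Filter Matrix Polynomial Topology
open scoped Kronecker

noncomputable section

/-- Convergence in distribution (weak convergence of the laws) of a sequence of random
elements `X n` towards the limit law `L`. -/
def TendstoInDistribution {Ω E : Type*} [MeasurableSpace Ω] [MeasurableSpace E] [TopologicalSpace E]
    (μ : Measure Ω) (X : ℕ → Ω → E) (L : Measure E) : Prop :=
  ∀ f : BoundedContinuousFunction E ℝ,
    Tendsto (fun n => ∫ ω, f (X n ω) ∂μ) atTop (𝓝 (∫ x, f x ∂L))

/-- Convergence in probability of `X n` towards the constant `c`. -/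
def TendstoInProbability {Ω E : Type*} [MeasurableSpace Ω] [PseudoMetricSpace E]
    (μ : Measure Ω) (X : ℕ → Ω → E) (c : E) : Prop :=
  ∀ ε : ℝ, 0 < ε → Tendsto (fun n => μ {ω | ε ≤ dist (X n ω) c}) atTop (𝓝 0)

/-- The law of a vector of i.i.d. standard Gaussian random variables. -/
def stdGaussianPi (ι : Type*) [Fintype ι] : Measure (ι → ℝ) :=
  Measure.pi fun _ => gaussianReal 0 1

/-- Positive semidefinite square root (junk value `0` if the matrix is not psd). -/
def matSqrt {ι : Type*} [Fintype ι] [DecidableEq ι] (Γ : Matrix ι ι ℝ) : Matrix ι ι ℝ :=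
  by classical exact if h : Γ.PosSemidef then
      (h.1.eigenvectorUnitary : Matrix ι ι ℝ) * diagonal (Real.sqrt ∘ h.1.eigenvalues) *
        (star h.1.eigenvectorUnitary : Matrix ι ι ℝ)
    else 0

/-- The centered Gaussian distribution `N(0, Γ)` on `ι → ℝ`. -/
def gaussianPi {ι : Type*} [Fintype ι] [DecidableEq ι] (Γ : Matrix ι ι ℝ) :
    Measure (ι → ℝ) :=
  (stdGaussianPi ι).map (fun z => matSqrt Γ *ᵥ z)

/-- The chi-squared distribution with `k` degrees of freedom: the law of the squared
Euclidean norm of a standard Gaussian vector of `ℝ^k`. -/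
def chiSquared (k : ℕ) : Measure ℝ :=
  (stdGaussianPi (Fin k)).map (fun z => ∑ i, z i ^ 2)

/-- `vec` operator stacking the columns of a `p × H` matrix. -/
def vecM {p H : ℕ} (M : Matrix (Fin p) (Fin H) ℝ) : Fin H × Fin p → ℝ :=
  fun x => M x.2 x.1

/-- The `(1-α)`-quantile of the law of the real random variable `T` under `ν`:
`inf {x | F(x) ≥ 1 - α}`. -/
def lawQuantile {Ω' : Type*} [MeasurableSpace Ω'] (ν : Measure Ω') (T : Ω' → ℝ) (α : ℝ) : ℝ :=
  sInf {x : ℝ | 1 - α ≤ (ν {ω' | T ω' ≤ x}).toReal}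

/-- A point `θ` is `ℳ`-nonsingular if `θ ∈ ℳ` and, near `θ`, the set `ℳ` is the zero set of a
continuously differentiable function `g` with values in some `ℝ^q` whose Jacobian at `θ` has
full rank `q`. -/
def MNonsingular {p : ℕ} (M : Set (Fin p → ℝ)) (θ : Fin p → ℝ) : Prop :=
  θ ∈ M ∧ ∃ (q : ℕ) (V : Set (Fin p → ℝ)) (g : (Fin p → ℝ) → Fin q → ℝ),
    IsOpen V ∧ θ ∈ V ∧ ContDiffOn ℝ 1 g V ∧
    (LinearMap.toMatrix' ((fderiv ℝ g θ) : (Fin p → ℝ) →ₗ[ℝ] (Fin q → ℝ))).rank = q ∧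
    M ∩ V = {x | g x = 0} ∩ V

/-- Moore–Penrose pseudo-inverse relation for real square matrices. -/
def IsMoorePenroseInv {ι : Type*} [Fintype ι] (A X : Matrix ι ι ℝ) : Prop :=
  A * X * A = A ∧ X * A * X = X ∧ (A * X)ᵀ = A * X ∧ (X * A)ᵀ = X * A

/-!
Conditionally on the data, `√n K̄*` is a sum of the i.i.d. weights `wⱼ` with deterministic vector
coefficients `(K̂ⱼ - Ĉ) / √n`. Such a sum is asymptotically `N(0, V)` as soon as its coefficients
are uniformly negligible and their empirical second moments tend to `V`: by the Cramér–Wold device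
one may take them scalar, and then the characteristic functions of `w` and of a standard Gaussian
agree up to `o(t²)`, so replacing the former by the latter in the product changes it by `o(1)`.
Almost surely the coefficients satisfy both conditions. For the sequence `Kⱼ - C` this is the strong
law of large numbers, since convergence of the means of `aⱼ²` forces `aₙ² / n → 0`; and `K̂ⱼ - Ĉ`
differs from `Kⱼ - C` by an array tending to `0` in quadratic mean.

The same comparison with characteristic functions that are `1 + o(t)` gives a weak law of
large numbers for weighted sums, which is applied to the weights `wⱼ² - 1` and `wⱼ` to show that
`V*` tends to `V`. For `√n (Ĉ - C)`, replacing the sample means by the expectations costs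
`√n (X̄ - E X) (Ψ̄ - E Ψ)`, which tends to `0` in probability, so the lemma of Slutsky reduces it
to the central limit theorem for the `Kⱼ`.
-/

/-! ### Modes of convergence -/

lemma tendstoInDistribution_of_map {Ω E : Type*} [MeasurableSpace Ω] [MeasurableSpace E]
    [TopologicalSpace E] [OpensMeasurableSpace E] {μ : Measure Ω} [IsProbabilityMeasure μ]
    {X : ℕ → Ω → E} {L : Measure E} [IsProbabilityMeasure L]
    (h : MeasureTheory.TendstoInDistribution X atTop id (fun _ ↦ μ) L) :
    _root_.TendstoInDistribution μ X L := by
  intro f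
  have hlim := ProbabilityMeasure.tendsto_iff_forall_integral_tendsto.1 h.tendsto f
  simp only [ProbabilityMeasure.coe_mk, Measure.map_id] at hlim
  refine hlim.congr fun n ↦ ?_
  exact integral_map (h.forall_aemeasurable n) f.continuous.measurable.aestronglyMeasurable

lemma tendstoInProbability_of_tendstoInMeasure {Ω E : Type*} [MeasurableSpace Ω]
    [PseudoMetricSpace E] {μ : Measure Ω} {X : ℕ → Ω → E} {c : E}
    (h : TendstoInMeasure μ X atTop fun _ ↦ c) : TendstoInProbability μ X c :=
  tendstoInMeasure_iff_dist.1 h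

lemma tendstoInMeasure_pi {Ω J ι E : Type*} [MeasurableSpace Ω] {μ : Measure Ω} {l : Filter J}
    [Fintype ι] [PseudoMetricSpace E] {X : J → Ω → ι → E} {Z : Ω → ι → E}
    (h : ∀ i, TendstoInMeasure μ (fun n ω ↦ X n ω i) l fun ω ↦ Z ω i) :
    TendstoInMeasure μ X l Z := by
  simp only [tendstoInMeasure_iff_dist] at h ⊢
  intro ε hε
  have hsum : Tendsto (fun n ↦ ∑ i, μ {ω | ε ≤ dist (X n ω i) (Z ω i)}) l (𝓝 0) := by
    simpa using tendsto_finsetSum Finset.univ fun i _ ↦ h i ε hε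
  refine tendsto_of_tendsto_of_tendsto_of_le_of_le tendsto_const_nhds hsum (fun _ ↦ zero_le)
    fun n ↦ ?_
  have hcover : {ω | ε ≤ dist (X n ω) (Z ω)} ⊆ ⋃ i, {ω | ε ≤ dist (X n ω i) (Z ω i)} := by
    intro ω hω
    by_contra hnot
    simp only [Set.mem_iUnion, Set.mem_ofPred_eq, not_exists, not_le] at hnot hω
    exact hω.not_gt ((dist_pi_lt_iff hε).2 hnot)
  calc μ {ω | ε ≤ dist (X n ω) (Z ω)}
      ≤ μ (⋃ i, {ω | ε ≤ dist (X n ω i) (Z ω i)}) := measure_mono hcover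
    _ ≤ ∑ i, μ {ω | ε ≤ dist (X n ω i) (Z ω i)} := measure_iUnion_fintype_le _ _

section ConstantLimit

variable {Ω Ω' J E : Type*} [MeasurableSpace Ω] [MeasurableSpace Ω'] [MeasurableSpace E]
  {μ : Measure Ω} [IsProbabilityMeasure μ] {μ' : Measure Ω'} [IsProbabilityMeasure μ']
  {l : Filter J}

lemma tendstoInMeasure_of_tendstoInDistribution_const [PseudoMetricSpace E] [BorelSpace E]
    {X : J → Ω → E} {c : E}
    (h : MeasureTheory.TendstoInDistribution X l (fun _ : Ω' ↦ c) (fun _ ↦ μ) μ') :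
    TendstoInMeasure μ X l fun _ ↦ c := by
  rw [tendstoInMeasure_iff_dist]
  intro ε hε
  have hclosed : IsClosed {x | ε ≤ dist x c} := isClosed_le (by fun_prop) (by fun_prop)
  have hlimsup := ProbabilityMeasure.limsup_measure_closed_le_of_tendsto h.tendsto hclosed
  have hnull : Measure.dirac c {x | ε ≤ dist x c} = 0 := by
    rw [Measure.dirac_apply' c hclosed.measurableSet]
    simp [hε]
  simp only [ProbabilityMeasure.coe_mk, Measure.map_const, measure_univ, one_smul, hnull,
    nonpos_iff_eq_zero, Measure.map_apply_of_aemeasurable (h.forall_aemeasurable _)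
      hclosed.measurableSet] at hlimsup
  exact tendsto_of_le_liminf_of_limsup_le zero_le hlimsup.le

lemma tendstoInMeasure_continuous_comp_prodMk {E' F : Type*} [SeminormedAddCommGroup E]
    [SecondCountableTopology E] [BorelSpace E] [MeasurableSpace E'] [SeminormedAddCommGroup E']
    [SecondCountableTopology E'] [BorelSpace E'] [PseudoMetricSpace F]
    [l.IsCountablyGenerated] {X : J → Ω → E}
    {Y : J → Ω → E'} {a : E} {b : E'} (hX : TendstoInMeasure μ X l fun _ ↦ a)
    (hY : TendstoInMeasure μ Y l fun _ ↦ b) (hXm : ∀ n, AEMeasurable (X n) μ)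
    (hYm : ∀ n, AEMeasurable (Y n) μ) {g : E × E' → F} (hg : Continuous g) :
    TendstoInMeasure μ (fun n ω ↦ g (X n ω, Y n ω)) l fun _ ↦ g (a, b) := by
  borelize F
  exact tendstoInMeasure_of_tendstoInDistribution_const
    ((hX.tendstoInDistribution_of_aemeasurable hXm aemeasurable_const
      ).continuous_comp_prodMk_of_tendstoInMeasure_const hg hY hYm)

end ConstantLimit

/-! ### Gaussian vectors -/

section Gaussian

variable {ι : Type*} [Fintype ι] [DecidableEq ι] {Γ : Matrix ι ι ℝ}

lemma transpose_matSqrt (hΓ : Γ.PosSemidef) : (matSqrt Γ)ᵀ = matSqrt Γ := by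
  rw [matSqrt, dif_pos hΓ, ← conjTranspose_eq_transpose_of_trivial, ← star_eq_conjTranspose,
    star_mul, star_mul, star_star, mul_assoc, star_eq_conjTranspose (diagonal _),
    conjTranspose_eq_transpose_of_trivial, diagonal_transpose]

lemma matSqrt_mul_self (hΓ : Γ.PosSemidef) : matSqrt Γ * matSqrt Γ = Γ := by
  let U := (hΓ.1.eigenvectorUnitary : Matrix ι ι ℝ)
  let D : Matrix ι ι ℝ := diagonal (Real.sqrt ∘ hΓ.1.eigenvalues)
  have hUU : star U * U = 1 := Unitary.coe_star_mul_self _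
  have hDD : D * D = diagonal hΓ.1.eigenvalues := by
    rw [diagonal_mul_diagonal]
    congr 1 with i
    exact Real.mul_self_sqrt (hΓ.eigenvalues_nonneg i)
  calc matSqrt Γ * matSqrt Γ = U * D * star U * (U * D * star U) := by
        rw [matSqrt, dif_pos hΓ]
    _ = U * (D * (star U * U) * D) * star U := by simp only [mul_assoc]
    _ = U * diagonal hΓ.1.eigenvalues * star U := by rw [hUU, mul_one, hDD]
    _ = Γ := hΓ.1.spectral_theorem.symm

instance {ι : Type*} [Fintype ι] : IsProbabilityMeasure (stdGaussianPi ι) := by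
  unfold stdGaussianPi
  infer_instance

instance : IsProbabilityMeasure (gaussianPi Γ) :=
  Measure.isProbabilityMeasure_map
    (Continuous.measurable (by fun_prop) : Measurable fun z ↦ matSqrt Γ *ᵥ z).aemeasurable

lemma hasLaw_dotProduct_stdGaussianPi {ι : Type*} [Fintype ι] (t : ι → ℝ) :
    HasLaw (fun z ↦ t ⬝ᵥ z) (gaussianReal 0 (t ⬝ᵥ t).toNNReal) (stdGaussianPi ι) where
  aemeasurable := (Continuous.measurable (by fun_prop)).aemeasurable
  map_eq := by
    have hmeas (i : ι) : AEMeasurable (fun z : ι → ℝ ↦ z i) (stdGaussianPi ι) :=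
      (measurable_pi_apply i).aemeasurable
    have hindep : iIndepFun (fun i (z : ι → ℝ) ↦ t i * z i) (stdGaussianPi ι) :=
      iIndepFun_pi (X := fun i x ↦ t i * x) (by fun_prop)
    have hcoord (i : ι) : (stdGaussianPi ι).map (fun z ↦ z i) = gaussianReal 0 1 :=
      (measurePreserving_eval _ i).map_eq
    have hquad : 0 ≤ t ⬝ᵥ t := dotProduct_self_star_nonneg t
    refine Measure.ext_of_charFun ?_
    ext s
    calc charFun ((stdGaussianPi ι).map fun z ↦ t ⬝ᵥ z) s
        = ∏ i, charFun (gaussianReal 0 1) (t i * s) := by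
          simp only [dotProduct]
          rw [hindep.charFun_map_fun_sum_eq_prod fun i ↦ (hmeas i).const_mul _, Finset.prod_apply]
          simp only [charFun_map_mul_comp (hmeas _), hcoord]
      _ = charFun (gaussianReal 0 (t ⬝ᵥ t).toNNReal) s := by
          simp only [charFun_gaussianReal, ← Complex.exp_sum, Real.coe_toNNReal _ hquad]
          congr 1
          simp only [dotProduct]
          push_cast
          simp only [mul_zero, zero_mul, zero_sub, one_mul, Finset.sum_neg_distrib,
            Finset.sum_mul, Finset.sum_div, mul_pow, ← pow_two]

lemma hasLaw_dotProduct_gaussianPi (hΓ : Γ.PosSemidef) (t : ι → ℝ) :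
    HasLaw (fun z ↦ t ⬝ᵥ z) (gaussianReal 0 (t ⬝ᵥ Γ *ᵥ t).toNNReal) (gaussianPi Γ) where
  aemeasurable := (Continuous.measurable (by fun_prop)).aemeasurable
  map_eq := by
    have hself (z : ι → ℝ) : t ⬝ᵥ matSqrt Γ *ᵥ z = (matSqrt Γ *ᵥ t) ⬝ᵥ z := by
      rw [dotProduct_mulVec, ← mulVec_transpose, transpose_matSqrt hΓ]
    have hquad : (matSqrt Γ *ᵥ t) ⬝ᵥ (matSqrt Γ *ᵥ t) = t ⬝ᵥ Γ *ᵥ t := by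
      rw [← hself, mulVec_mulVec, matSqrt_mul_self hΓ]
    rw [gaussianPi, Measure.map_map (Continuous.measurable (by fun_prop))
      (Continuous.measurable (by fun_prop)), ← hquad,
      ← (hasLaw_dotProduct_stdGaussianPi (matSqrt Γ *ᵥ t)).map_eq]
    exact congrArg (Measure.map · _) (funext hself)

end Gaussian

lemma charFun_map_toLp {ι Ω : Type*} [Fintype ι] [MeasurableSpace Ω] {μ : Measure Ω}
    {X : Ω → ι → ℝ} (hX : AEMeasurable X μ) (t : EuclideanSpace ℝ ι) :
    charFun (μ.map fun ω ↦ WithLp.toLp 2 (X ω)) t =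
      charFun (μ.map fun ω ↦ t.ofLp ⬝ᵥ X ω) 1 := by
  rw [charFun_apply, charFun_apply, integral_map (by fun_prop) (by fun_prop),
    integral_map (by unfold dotProduct; fun_prop) (by fun_prop)]
  simp [EuclideanSpace.inner_eq_star_dotProduct]

theorem tendstoInDistribution_of_forall_dotProduct {ι Ω Ω' : Type*} [Fintype ι]
    [MeasurableSpace Ω] [MeasurableSpace Ω'] {μ : Measure Ω} [IsProbabilityMeasure μ]
    {μ' : Measure Ω'} [IsProbabilityMeasure μ'] {X : ℕ → Ω → ι → ℝ} {Z : Ω' → ι → ℝ}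
    (hX : ∀ n, AEMeasurable (X n) μ) (hZ : AEMeasurable Z μ')
    (h : ∀ t : ι → ℝ, MeasureTheory.TendstoInDistribution (fun n ω ↦ t ⬝ᵥ X n ω) atTop
      (fun ω ↦ t ⬝ᵥ Z ω) (fun _ ↦ μ) μ') :
    MeasureTheory.TendstoInDistribution X atTop Z (fun _ ↦ μ) μ' := by
  have hE : MeasureTheory.TendstoInDistribution (fun n ω ↦ WithLp.toLp 2 (X n ω)) atTop
      (fun ω ↦ WithLp.toLp 2 (Z ω)) (fun _ ↦ μ) μ' :=
    { forall_aemeasurable := fun n ↦ by fun_prop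
      tendsto := by
        refine ProbabilityMeasure.tendsto_iff_tendsto_charFun.2 fun t ↦ ?_
        simpa [charFun_map_toLp, hX, hZ] using
          ProbabilityMeasure.tendsto_iff_tendsto_charFun.1 (h t.ofLp).tendsto 1 }
  exact hE.continuous_comp (PiLp.continuous_ofLp 2 _)

/-! ### Weighted sums of i.i.d. variables -/

lemma norm_prod_sub_prod_le_sum_norm_sub {ι R : Type*} [NormedCommRing R] [NormOneClass R]
    (s : Finset ι) {a b : ι → R} (ha : ∀ j ∈ s, ‖a j‖ ≤ 1) (hb : ∀ j ∈ s, ‖b j‖ ≤ 1) :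
    ‖∏ j ∈ s, a j - ∏ j ∈ s, b j‖ ≤ ∑ j ∈ s, ‖a j - b j‖ := by
  induction s using Finset.cons_induction with
  | empty => simp
  | cons i s hi ih =>
    simp only [Finset.forall_mem_cons] at ha hb
    have hprod : ‖∏ j ∈ s, a j‖ ≤ 1 :=
      (Finset.norm_prod_le s a).trans
        (Finset.prod_le_one (fun _ _ ↦ norm_nonneg _) ha.2)
    rw [Finset.prod_cons, Finset.prod_cons, Finset.sum_cons]
    calc ‖a i * ∏ j ∈ s, a j - b i * ∏ j ∈ s, b j‖
        = ‖(a i - b i) * ∏ j ∈ s, a j + b i * (∏ j ∈ s, a j - ∏ j ∈ s, b j)‖ := by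
          congr 1
          ring
      _ ≤ ‖a i - b i‖ * ‖∏ j ∈ s, a j‖ + ‖b i‖ * ‖∏ j ∈ s, a j - ∏ j ∈ s, b j‖ :=
          (norm_add_le _ _).trans (add_le_add (norm_mul_le _ _) (norm_mul_le _ _))
      _ ≤ ‖a i - b i‖ * 1 + 1 * ∑ j ∈ s, ‖a j - b j‖ := by
          gcongr
          exacts [hb.1, ih ha.2 hb.2]
      _ = ‖a i - b i‖ + ∑ j ∈ s, ‖a j - b j‖ := by ring

/-- Asymptotic negligibility of the triangular array `(c n j)_{j < n}`: the maximum of `|c n j|`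
over `j < n` tends to `0`. It is the condition under which no single term of a row matters in the
limit of the row sums. -/
def IsNegligibleArray (c : ℕ → ℕ → ℝ) : Prop :=
  ∀ ε > 0, ∀ᶠ n in atTop, ∀ j < n, |c n j| ≤ ε

lemma IsNegligibleArray.mul_const {c : ℕ → ℕ → ℝ} (hc : IsNegligibleArray c) (t : ℝ) :
    IsNegligibleArray fun n j ↦ c n j * t := by
  intro ε hε
  filter_upwards [hc (ε / (|t| + 1)) (by positivity)] with n hn j hj
  calc |c n j * t| = |c n j| * |t| := abs_mul _ _
    _ ≤ ε / (|t| + 1) * (|t| + 1) := by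
        gcongr
        exacts [hn j hj, (lt_add_one _).le]
    _ = ε := div_mul_cancel₀ _ (by positivity)

lemma tendsto_prod_sub_prod_of_isLittleO {ψ χ : ℝ → ℂ} (hψ : ∀ s, ‖ψ s‖ ≤ 1)
    (hχ : ∀ s, ‖χ s‖ ≤ 1) {g : ℝ → ℝ} (hg : ∀ s, 0 ≤ g s)
    (ho : (fun s ↦ ψ s - χ s) =o[𝓝 0] g) {c : ℕ → ℕ → ℝ}
    (hc : IsNegligibleArray c)
    (hbdd : IsBoundedUnder (· ≤ ·) atTop fun n ↦ ∑ j ∈ Finset.range n, g (c n j)) :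
    Tendsto (fun n ↦ ∏ j ∈ Finset.range n, ψ (c n j) - ∏ j ∈ Finset.range n, χ (c n j))
      atTop (𝓝 0) := by
  obtain ⟨B, hB⟩ := hbdd
  refine (Asymptotics.isLittleO_one_iff ℝ).1 (Asymptotics.IsLittleO.of_bound fun ε hε ↦ ?_)
  obtain ⟨η, hη, hclose⟩ :=
    Metric.eventually_nhds_iff.1 (ho.def (c := ε / (|B| + 1)) (by positivity))
  filter_upwards [hc (η / 2) (by positivity), eventually_map.1 hB] with n hn hBn
  calc ‖∏ j ∈ Finset.range n, ψ (c n j) - ∏ j ∈ Finset.range n, χ (c n j)‖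
      ≤ ∑ j ∈ Finset.range n, ‖ψ (c n j) - χ (c n j)‖ :=
        norm_prod_sub_prod_le_sum_norm_sub _ (fun j _ ↦ hψ _) fun j _ ↦ hχ _
    _ ≤ ∑ j ∈ Finset.range n, ε / (|B| + 1) * g (c n j) := by
        refine Finset.sum_le_sum fun j hj ↦ ?_
        have hcη : dist (c n j) 0 < η := by
          rw [dist_zero_right, Real.norm_eq_abs]
          linarith [hn j (Finset.mem_range.1 hj)]
        simpa [abs_of_nonneg (hg _)] using hclose hcη
    _ = ε / (|B| + 1) * ∑ j ∈ Finset.range n, g (c n j) := by rw [Finset.mul_sum]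
    _ ≤ ε / (|B| + 1) * (|B| + 1) := by
        gcongr
        linarith [le_abs_self B]
    _ = ε * ‖(1 : ℝ)‖ := by
        rw [norm_one, mul_one, div_mul_cancel₀ _ (by positivity)]

lemma charFun_sub_one_isLittleO {Ω : Type*} [MeasurableSpace Ω] {μ : Measure Ω}
    [IsProbabilityMeasure μ] {W : Ω → ℝ} (hW : Integrable W μ) (h0 : ∫ ω, W ω ∂μ = 0) :
    (fun t ↦ charFun (μ.map W) t - 1) =o[𝓝 0] fun t : ℝ ↦ t := by
  have hWm := hW.aemeasurable
  have : IsProbabilityMeasure (μ.map W) := Measure.isProbabilityMeasure_map hWm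
  have hmem : MemLp id (1 : ℕ) (μ.map W) := by
    rw [Nat.cast_one, memLp_one_iff_integrable,
      integrable_map_measure aestronglyMeasurable_id hWm]
    exact hW
  have htaylor (t : ℝ) : taylorWithinEval (charFun (μ.map W)) 1 Set.univ 0 t = 1 := by
    rw [taylorWithinEval_charFun_zero hmem, Finset.sum_range_succ, Finset.sum_range_one]
    simp only [pow_one, pow_zero]
    rw [integral_map (f := fun x : ℝ ↦ x) hWm (by fun_prop), h0]
    simp
  simpa only [htaylor, sub_zero, pow_one] using
    taylor_isLittleO_univ (x₀ := (0 : ℝ)) (contDiff_charFun hmem)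

lemma charFun_sub_charFun_gaussianReal_isLittleO {Ω : Type*} [MeasurableSpace Ω]
    {μ : Measure Ω} [IsProbabilityMeasure μ] {W : Ω → ℝ} (hW : AEMeasurable W μ)
    (h0 : ∫ ω, W ω ∂μ = 0) (h1 : ∫ ω, W ω ^ 2 ∂μ = 1) :
    (fun t ↦ charFun (μ.map W) t - charFun (gaussianReal 0 1) t) =o[𝓝 0] fun t : ℝ ↦ t ^ 2 := by
  have hmean : ∫ x, id x ∂gaussianReal 0 1 = 0 := by simp
  have hvar : ∫ x, id x ^ 2 ∂gaussianReal 0 1 = 1 := by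
    rw [← variance_of_integral_eq_zero aemeasurable_id hmean, variance_id_gaussianReal,
      NNReal.coe_one]
  simpa [Measure.map_id] using
    (taylor_charFun_two hW h0 h1).sub (taylor_charFun_two aemeasurable_id hmean hvar)

section WeightedSums

variable {Ω Ω' : Type*} [MeasurableSpace Ω] [MeasurableSpace Ω'] {μ : Measure Ω}
  {μ' : Measure Ω'} {W : ℕ → Ω → ℝ} {c : ℕ → ℕ → ℝ}

lemma charFun_map_sum_mul (hindep : iIndepFun W μ)
    (hident : ∀ i, IdentDistrib (W i) (W 0) μ μ) (a : ℕ → ℝ) (n : ℕ) (t : ℝ) :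
    charFun (μ.map fun ω ↦ ∑ j ∈ Finset.range n, a j * W j ω) t =
      ∏ j ∈ Finset.range n, charFun (μ.map (W 0)) (a j * t) := by
  have hW (j : ℕ) : AEMeasurable (W j) μ := (hident j).aemeasurable_fst
  have hscaled : iIndepFun (fun j ω ↦ a j * W j ω) μ :=
    hindep.comp (fun j x ↦ a j * x) fun j ↦ measurable_const_mul _
  rw [(hscaled.restrict _).charFun_map_fun_finsetSum_eq_prod fun j _ ↦ (hW j).const_mul _,
    Finset.prod_apply]
  simp only [charFun_map_mul_comp (hW _), (hident _).map_eq]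

variable [IsProbabilityMeasure μ] [IsProbabilityMeasure μ']

theorem tendstoInDistribution_sum_mul_gaussianReal (hindep : iIndepFun W μ)
    (hident : ∀ i, IdentDistrib (W i) (W 0) μ μ) (h0 : ∫ ω, W 0 ω ∂μ = 0)
    (h1 : ∫ ω, W 0 ω ^ 2 ∂μ = 1) (hc : IsNegligibleArray c)
    {τ : NNReal} (hτ : Tendsto (fun n ↦ ∑ j ∈ Finset.range n, c n j ^ 2) atTop (𝓝 τ))
    {Y : Ω' → ℝ} (hY : HasLaw Y (gaussianReal 0 τ) μ') :
    MeasureTheory.TendstoInDistribution (fun n ω ↦ ∑ j ∈ Finset.range n, c n j * W j ω) atTop Y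
      (fun _ ↦ μ) μ' where
  forall_aemeasurable n :=
    Finset.aemeasurable_fun_sum _ fun j _ ↦ (hident j).aemeasurable_fst.const_mul _
  aemeasurable_limit := hY.aemeasurable
  tendsto := by
    have hW : AEMeasurable (W 0) μ := (hident 0).aemeasurable_fst
    have : IsProbabilityMeasure (μ.map (W 0)) := Measure.isProbabilityMeasure_map hW
    refine ProbabilityMeasure.tendsto_iff_tendsto_charFun.2 fun t ↦ ?_
    have hsq : Tendsto (fun n ↦ ∑ j ∈ Finset.range n, (c n j * t) ^ 2) atTop (𝓝 (τ * t ^ 2)) := by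
      simpa only [mul_pow, Finset.sum_mul] using hτ.mul_const (t ^ 2)
    have hdiff := tendsto_prod_sub_prod_of_isLittleO (fun s ↦ norm_charFun_le_one s)
      (fun s ↦ norm_charFun_le_one s) sq_nonneg
      (charFun_sub_charFun_gaussianReal_isLittleO hW h0 h1) (hc.mul_const t)
      hsq.isBoundedUnder_le
    have hprod : Tendsto (fun n ↦ ∏ j ∈ Finset.range n, charFun (gaussianReal 0 1) (c n j * t))
        atTop (𝓝 (charFun (gaussianReal 0 τ) t)) := by
      have hexp := (Complex.continuous_exp.tendsto _).comp
        ((Complex.continuous_ofReal.tendsto _).comp (hsq.div_const 2).neg)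
      simpa [Function.comp_def, charFun_gaussianReal, ← Complex.exp_sum, Finset.sum_div] using hexp
    simpa [charFun_map_sum_mul hindep hident, hY.map_eq] using hdiff.add hprod

theorem tendstoInMeasure_sum_mul_zero (hindep : iIndepFun W μ)
    (hident : ∀ i, IdentDistrib (W i) (W 0) μ μ) (hint : Integrable (W 0) μ)
    (h0 : ∫ ω, W 0 ω ∂μ = 0) (hc : IsNegligibleArray c)
    (hbdd : IsBoundedUnder (· ≤ ·) atTop fun n ↦ ∑ j ∈ Finset.range n, |c n j|) :
    TendstoInMeasure μ (fun n ω ↦ ∑ j ∈ Finset.range n, c n j * W j ω) atTop fun _ ↦ 0 := by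
  have hW : AEMeasurable (W 0) μ := hint.aemeasurable
  have : IsProbabilityMeasure (μ.map (W 0)) := Measure.isProbabilityMeasure_map hW
  refine tendstoInMeasure_of_tendstoInDistribution_const (μ' := μ)
    ⟨fun n ↦ Finset.aemeasurable_fun_sum _ fun j _ ↦ (hident j).aemeasurable_fst.const_mul _,
      aemeasurable_const, ProbabilityMeasure.tendsto_iff_tendsto_charFun.2 fun t ↦ ?_⟩
  have hbdd' : IsBoundedUnder (· ≤ ·) atTop fun n ↦ ∑ j ∈ Finset.range n, |c n j * t| := by
    obtain ⟨B, hB⟩ := hbdd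
    refine ⟨B * |t|, eventually_map.2 ((eventually_map.1 hB).mono fun n hn ↦ ?_)⟩
    simp only [abs_mul, ← Finset.sum_mul]
    gcongr
  have hdiff := tendsto_prod_sub_prod_of_isLittleO (χ := fun _ ↦ 1)
    (fun s ↦ norm_charFun_le_one s) (by simp) abs_nonneg
    (charFun_sub_one_isLittleO hint h0).abs_right (hc.mul_const t) hbdd'
  simpa [charFun_map_sum_mul hindep hident] using hdiff.add_const 1

end WeightedSums

/-! ### Empirical moments of triangular arrays -/

lemma IsNegligibleArray.add {c d : ℕ → ℕ → ℝ} (hc : IsNegligibleArray c)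
    (hd : IsNegligibleArray d) : IsNegligibleArray fun n j ↦ c n j + d n j := by
  intro ε hε
  filter_upwards [hc (ε / 2) (half_pos hε), hd (ε / 2) (half_pos hε)] with n hcn hdn j hj
  linarith [abs_add_le (c n j) (d n j), hcn j hj, hdn j hj]

lemma IsNegligibleArray.sum {ι : Type*} {c : ι → ℕ → ℕ → ℝ} (s : Finset ι)
    (hc : ∀ i ∈ s, IsNegligibleArray (c i)) : IsNegligibleArray fun n j ↦ ∑ i ∈ s, c i n j := by
  induction s using Finset.cons_induction with
  | empty => exact fun ε hε ↦ .of_forall fun n j _ ↦ by simpa using hε.le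
  | cons i s hi ih =>
    simp only [Finset.forall_mem_cons] at hc
    simpa only [Finset.sum_cons] using hc.1.add (ih hc.2)

lemma IsNegligibleArray.mul {c d : ℕ → ℕ → ℝ} (hc : IsNegligibleArray c)
    (hd : IsNegligibleArray d) : IsNegligibleArray fun n j ↦ c n j * d n j := by
  intro ε hε
  filter_upwards [hc ε hε, hd 1 one_pos] with n hcn hdn j hj
  rw [abs_mul, ← mul_one ε]
  exact mul_le_mul (hcn j hj) (hdn j hj) (abs_nonneg _) hε.le

/-- The mean of the first `n` terms of the sequence `a`, with value `0` for `n = 0`. -/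
def sampleMean (n : ℕ) (a : ℕ → ℝ) : ℝ := (n : ℝ)⁻¹ * ∑ j ∈ Finset.range n, a j

/-- The `j`-th term of the empirical covariance of the first `n` terms of `a` and `b`. The index
`j` is not restricted to `j < n`. -/
def centeredProduct (n : ℕ) (a b : ℕ → ℝ) (j : ℕ) : ℝ :=
  (a j - sampleMean n a) * (b j - sampleMean n b)

/-- The empirical covariance of the first `n` terms of `a` and `b`, normalized by `1 / n`. -/
def sampleCov (n : ℕ) (a b : ℕ → ℝ) : ℝ := sampleMean n (centeredProduct n a b)

section SampleMean

variable (n : ℕ) (a b : ℕ → ℝ)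

lemma sampleMean_add : sampleMean n (fun j ↦ a j + b j) = sampleMean n a + sampleMean n b := by
  simp only [sampleMean, Finset.sum_add_distrib, mul_add]

lemma sampleMean_const_mul (c : ℝ) : sampleMean n (fun j ↦ c * a j) = c * sampleMean n a := by
  simp only [sampleMean, ← Finset.mul_sum, mul_left_comm]

lemma sampleMean_sum {ι : Type*} (s : Finset ι) (a : ι → ℕ → ℝ) :
    sampleMean n (fun j ↦ ∑ i ∈ s, a i j) = ∑ i ∈ s, sampleMean n (a i) := by
  simp only [sampleMean, Finset.sum_comm (s := Finset.range n), Finset.mul_sum]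

variable {a b}

lemma sampleMean_mono (h : ∀ j, a j ≤ b j) : sampleMean n a ≤ sampleMean n b := by
  unfold sampleMean
  gcongr with j
  exact h j

lemma sq_sampleMean_mul_le : sampleMean n (fun j ↦ a j * b j) ^ 2 ≤
    sampleMean n (fun j ↦ a j ^ 2) * sampleMean n fun j ↦ b j ^ 2 := by
  simp only [sampleMean, mul_pow]
  rw [mul_mul_mul_comm, ← sq]
  gcongr
  exact Finset.sum_mul_sq_le_sq_mul_sq _ _ _

variable {n}

lemma sampleMean_const (hn : n ≠ 0) (c : ℝ) : sampleMean n (fun _ ↦ c) = c := by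
  simp only [sampleMean, Finset.sum_const, Finset.card_range, nsmul_eq_mul]
  field_simp

lemma sampleMean_sub_const (hn : n ≠ 0) (c : ℝ) :
    sampleMean n (fun j ↦ a j - c) = sampleMean n a - c := by
  simp only [sub_eq_add_neg, sampleMean_add, sampleMean_const hn]

lemma sq_div_sqrt_le_sampleMean_sq {j : ℕ} (hj : j < n) :
    (a j / √n) ^ 2 ≤ sampleMean n fun j ↦ a j ^ 2 := by
  rw [div_pow, Real.sq_sqrt n.cast_nonneg, div_eq_inv_mul, sampleMean]
  gcongr
  exact Finset.single_le_sum (f := fun j ↦ a j ^ 2) (fun _ _ ↦ sq_nonneg _)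
    (Finset.mem_range.2 hj)

variable (n a b) in
lemma centeredProduct_eq (α β : ℝ) (j : ℕ) : centeredProduct n a b j =
    (a j - α) * (b j - β) + -(sampleMean n b - β) * (a j - α) + -(sampleMean n a - α) * (b j - β) +
      (sampleMean n a - α) * (sampleMean n b - β) := by
  unfold centeredProduct
  ring

variable (a b) in
lemma sampleCov_eq (hn : n ≠ 0) (α β : ℝ) : sampleCov n a b =
    sampleMean n (fun j ↦ (a j - α) * (b j - β)) -
      (sampleMean n a - α) * (sampleMean n b - β) := by
  unfold sampleCov
  simp only [funext (centeredProduct_eq n a b α β), sampleMean_add, sampleMean_const_mul,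
    sampleMean_sub_const hn, sampleMean_const hn]
  ring

variable (n a b) in
lemma sampleCov_eq_sub :
    sampleCov n a b = sampleMean n (fun j ↦ a j * b j) - sampleMean n a * sampleMean n b := by
  rcases eq_or_ne n 0 with rfl | hn
  · simp [sampleCov, sampleMean]
  · simpa only [sub_zero] using sampleCov_eq a b hn 0 0

end SampleMean

lemma isNegligibleArray_of_sq_le {c : ℕ → ℕ → ℝ} {d : ℕ → ℝ} (hd : Tendsto d atTop (𝓝 0))
    (hcd : ∀ n, ∀ j < n, c n j ^ 2 ≤ d n) : IsNegligibleArray c := by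
  intro ε hε
  filter_upwards [hd.eventually_le_const (pow_pos hε 2)] with n hn j hj
  exact abs_le_of_sq_le_sq ((hcd n j hj).trans hn) hε.le

lemma tendsto_div_add_one_of_tendsto_sampleMean {a : ℕ → ℝ} {s : ℝ}
    (ha : Tendsto (fun n ↦ sampleMean n a) atTop (𝓝 s)) :
    Tendsto (fun n ↦ a n / ((n : ℝ) + 1)) atTop (𝓝 0) := by
  have hlim := ((tendsto_add_atTop_iff_nat 1).2 ha).sub
    ((tendsto_natCast_div_add_atTop (1 : ℝ)).mul ha)
  rw [one_mul, sub_self] at hlim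
  refine hlim.congr' ?_
  filter_upwards [eventually_ne_atTop 0] with n hn
  simp only [sampleMean, Finset.sum_range_succ]
  push_cast
  field_simp
  ring

lemma isNegligibleArray_div_sqrt {a : ℕ → ℝ} {s : ℝ}
    (ha : Tendsto (fun n ↦ sampleMean n fun j ↦ a j ^ 2) atTop (𝓝 s)) :
    IsNegligibleArray fun n j ↦ a j / √n := by
  intro ε hε
  have hlarge : Tendsto (fun n : ℕ ↦ ε ^ 2 * n) atTop atTop :=
    tendsto_natCast_atTop_atTop.const_mul_atTop (by positivity)
  obtain ⟨N, hN⟩ := eventually_atTop.1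
    ((tendsto_div_add_one_of_tendsto_sampleMean ha).eventually_le_const (pow_pos hε 2))
  filter_upwards [hlarge.eventually_ge_atTop (∑ j ∈ Finset.range N, a j ^ 2)] with n hn j hj
  have hsq : a j ^ 2 ≤ ε ^ 2 * n := by
    rcases lt_or_ge j N with hjN | hNj
    · exact (Finset.single_le_sum (f := fun j ↦ a j ^ 2) (fun _ _ ↦ sq_nonneg _)
        (Finset.mem_range.2 hjN)).trans hn
    · have hjn : (j : ℝ) + 1 ≤ n := by exact_mod_cast hj
      calc a j ^ 2 ≤ ε ^ 2 * (j + 1) := (div_le_iff₀ (by positivity)).1 (hN j hNj)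
        _ ≤ ε ^ 2 * n := by gcongr
  have hn0 : (0 : ℝ) < n := by exact_mod_cast j.zero_le.trans_lt hj
  refine abs_le_of_sq_le_sq ?_ hε.le
  rwa [div_pow, Real.sq_sqrt hn0.le, div_le_iff₀ hn0]

/-- The triangular array `r` tends to `0` in quadratic mean along its rows. -/
def MeanSquareNull (r : ℕ → ℕ → ℝ) : Prop :=
  Tendsto (fun n ↦ sampleMean n fun j ↦ r n j ^ 2) atTop (𝓝 0)

namespace MeanSquareNull

variable {r s : ℕ → ℕ → ℝ}

lemma add (hr : MeanSquareNull r) (hs : MeanSquareNull s) :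
    MeanSquareNull fun n j ↦ r n j + s n j := by
  refine squeeze_zero (fun n ↦ ?_) (fun n ↦ ?_)
    (by simpa using (hr.const_mul 2).add (hs.const_mul 2))
  · exact mul_nonneg (by positivity) (Finset.sum_nonneg fun _ _ ↦ sq_nonneg _)
  · simp only [← sampleMean_const_mul, ← sampleMean_add]
    exact sampleMean_mono n fun j ↦ by nlinarith [sq_nonneg (r n j - s n j)]

lemma mul_of_tendsto_zero {c : ℕ → ℝ} {a : ℕ → ℝ} {σ : ℝ} (hc : Tendsto c atTop (𝓝 0))
    (ha : Tendsto (fun n ↦ sampleMean n fun j ↦ a j ^ 2) atTop (𝓝 σ)) :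
    MeanSquareNull fun n j ↦ c n * a j := by
  simpa only [MeanSquareNull, mul_pow, sampleMean_const_mul, zero_pow two_ne_zero, zero_mul] using
    (hc.pow 2).mul ha

lemma of_tendsto_zero {c : ℕ → ℝ} (hc : Tendsto c atTop (𝓝 0)) :
    MeanSquareNull fun n _ ↦ c n := by
  have hone : Tendsto (fun n ↦ sampleMean n fun _ ↦ (1 : ℝ) ^ 2) atTop (𝓝 1) :=
    tendsto_const_nhds.congr' <| (eventually_ne_atTop 0).mono fun n hn ↦ by
      simp [sampleMean_const hn]
  simpa using mul_of_tendsto_zero hc hone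

lemma isNegligibleArray_div_sqrt (hr : MeanSquareNull r) :
    IsNegligibleArray fun n j ↦ r n j / √n :=
  isNegligibleArray_of_sq_le hr fun _ _ hj ↦ sq_div_sqrt_le_sampleMean_sq hj

lemma tendsto_sampleMean_mul {a : ℕ → ℕ → ℝ} {σ : ℝ} (hr : MeanSquareNull r)
    (ha : Tendsto (fun n ↦ sampleMean n fun j ↦ a n j ^ 2) atTop (𝓝 σ)) :
    Tendsto (fun n ↦ sampleMean n fun j ↦ a n j * r n j) atTop (𝓝 0) := by
  have hsq : Tendsto (fun n ↦ sampleMean n (fun j ↦ a n j * r n j) ^ 2) atTop (𝓝 0) :=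
    squeeze_zero (fun _ ↦ sq_nonneg _) (fun n ↦ sq_sampleMean_mul_le n)
      (by simpa using ha.mul hr)
  rw [tendsto_zero_iff_abs_tendsto_zero]
  simpa [Function.comp_def, Real.sqrt_sq_eq_abs] using hsq.sqrt

end MeanSquareNull

/-- The conditions on a triangular array `a` of real vectors under which its rows, multiplied by
i.i.d. weights of mean `0` and variance `1`, satisfy the central limit theorem with limiting
covariance `V`: no term dominates its row, and the empirical second moments tend to `V`. -/
structure LindebergArray {α : Type*} (a : ℕ → ℕ → α → ℝ) (V : Matrix α α ℝ) : Prop where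
  negligible (x : α) : IsNegligibleArray fun n j ↦ a n j x / √n
  tendsto_sampleMean_mul (x y : α) :
    Tendsto (fun n ↦ sampleMean n fun j ↦ a n j x * a n j y) atTop (𝓝 (V x y))

namespace LindebergArray

variable {α : Type*} {V : Matrix α α ℝ}

lemma tendsto_sampleMean_sq {a : ℕ → ℕ → α → ℝ} (ha : LindebergArray a V) (x : α) :
    Tendsto (fun n ↦ sampleMean n fun j ↦ a n j x ^ 2) atTop (𝓝 (V x x)) := by
  simpa only [sq] using ha.tendsto_sampleMean_mul x x

lemma of_sequence {f : ℕ → α → ℝ}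
    (hf : ∀ x y, Tendsto (fun n ↦ sampleMean n fun j ↦ f j x * f j y) atTop (𝓝 (V x y))) :
    LindebergArray (fun _ ↦ f) V where
  negligible x := isNegligibleArray_div_sqrt (by simpa only [sq] using hf x x)
  tendsto_sampleMean_mul := hf

lemma add_meanSquareNull {a r : ℕ → ℕ → α → ℝ} (ha : LindebergArray a V)
    (hr : ∀ x, MeanSquareNull fun n j ↦ r n j x) :
    LindebergArray (fun n j x ↦ a n j x + r n j x) V where
  negligible x := by
    simpa only [add_div] using (ha.negligible x).add (hr x).isNegligibleArray_div_sqrt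
  tendsto_sampleMean_mul x y := by
    have hcross := ((hr y).tendsto_sampleMean_mul (ha.tendsto_sampleMean_sq x)).add
      ((hr x).tendsto_sampleMean_mul (ha.tendsto_sampleMean_sq y))
    have hsum := ((ha.tendsto_sampleMean_mul x y).add hcross).add
      ((hr y).tendsto_sampleMean_mul (hr x))
    simp only [add_zero, ← sampleMean_add] at hsum
    refine hsum.congr fun n ↦ congrArg (sampleMean n) (funext fun j ↦ ?_)
    ring

lemma centeredProduct_sub_sampleCov {a b : ℕ → α → ℝ} {α₀ β₀ σ τ C : α → ℝ}
    (ha : ∀ x, Tendsto (fun n ↦ sampleMean n fun j ↦ a j x) atTop (𝓝 (α₀ x)))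
    (hb : ∀ x, Tendsto (fun n ↦ sampleMean n fun j ↦ b j x) atTop (𝓝 (β₀ x)))
    (ha2 : ∀ x, Tendsto (fun n ↦ sampleMean n fun j ↦ (a j x - α₀ x) ^ 2) atTop (𝓝 (σ x)))
    (hb2 : ∀ x, Tendsto (fun n ↦ sampleMean n fun j ↦ (b j x - β₀ x) ^ 2) atTop (𝓝 (τ x)))
    (hab : ∀ x, Tendsto (fun n ↦ sampleMean n fun j ↦ (a j x - α₀ x) * (b j x - β₀ x)) atTop
      (𝓝 (C x)))
    (hV : ∀ x y, Tendsto (fun n ↦ sampleMean n fun j ↦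
      ((a j x - α₀ x) * (b j x - β₀ x) - C x) * ((a j y - α₀ y) * (b j y - β₀ y) - C y)) atTop
      (𝓝 (V x y))) :
    LindebergArray (fun n j x ↦ centeredProduct n (a · x) (b · x) j -
      sampleCov n (a · x) (b · x)) V := by
  have hα (x : α) : Tendsto (fun n ↦ sampleMean n (a · x) - α₀ x) atTop (𝓝 0) := by
    simpa using (ha x).sub_const (α₀ x)
  have hβ (x : α) : Tendsto (fun n ↦ sampleMean n (b · x) - β₀ x) atTop (𝓝 0) := by
    simpa using (hb x).sub_const (β₀ x)
  have hcov (x : α) : Tendsto (fun n ↦ sampleCov n (a · x) (b · x)) atTop (𝓝 (C x)) := by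
    have hlim := (hab x).sub ((hα x).mul (hβ x))
    rw [mul_zero, sub_zero] at hlim
    exact hlim.congr' <| (eventually_ne_atTop 0).mono fun n hn ↦ (sampleCov_eq _ _ hn _ _).symm
  have hconst (x : α) : Tendsto (fun n ↦ (sampleMean n (a · x) - α₀ x) *
      (sampleMean n (b · x) - β₀ x) + (C x - sampleCov n (a · x) (b · x))) atTop (𝓝 0) := by
    simpa using ((hα x).mul (hβ x)).add ((hcov x).const_sub (C x))
  have hscaledA (x : α) :=
    MeanSquareNull.mul_of_tendsto_zero (neg_zero (G := ℝ) ▸ (hβ x).neg) (ha2 x)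
  have hscaledB (x : α) :=
    MeanSquareNull.mul_of_tendsto_zero (neg_zero (G := ℝ) ▸ (hα x).neg) (hb2 x)
  convert (of_sequence hV).add_meanSquareNull fun x ↦
    ((hscaledA x).add (hscaledB x)).add (.of_tendsto_zero (hconst x)) using 4 with n j x
  rw [centeredProduct_eq n (a · x) (b · x) (α₀ x) (β₀ x)]
  ring

end LindebergArray

/-! ### Arrays multiplied by random weights -/

lemma sqrt_mul_sampleMean (n : ℕ) (a : ℕ → ℝ) :
    √n * sampleMean n a = (√n)⁻¹ * ∑ j ∈ Finset.range n, a j := by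
  rw [sampleMean, ← mul_assoc, ← div_eq_mul_inv, Real.sqrt_div_self]

lemma sqrt_mul_sampleMean_sub (n : ℕ) (a : ℕ → ℝ) (c : ℝ) :
    √n * (sampleMean n a - c) = (√n)⁻¹ * (∑ j ∈ Finset.range n, a j - n * c) := by
  rw [mul_sub, sqrt_mul_sampleMean, mul_sub, ← mul_assoc, inv_mul_eq_div √n n, Real.div_sqrt]

lemma sqrt_mul_sampleCov_sub (n : ℕ) (a b : ℕ → ℝ) (α β c : ℝ) :
    √n * (sampleCov n a b - c) = √n * (sampleMean n (fun j ↦ (a j - α) * (b j - β)) - c) -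
      √n * ((sampleMean n a - α) * (sampleMean n b - β)) := by
  rcases eq_or_ne n 0 with rfl | hn
  · simp
  · rw [sampleCov_eq a b hn α β]
    ring

lemma LindebergArray.tendsto_sum_sq {α : Type*} [Fintype α] {a : ℕ → ℕ → α → ℝ}
    {V : Matrix α α ℝ} (ha : LindebergArray a V) (t : α → ℝ) :
    Tendsto (fun n ↦ ∑ j ∈ Finset.range n, (∑ x, a n j x / √n * t x) ^ 2) atTop
      (𝓝 (t ⬝ᵥ V *ᵥ t)) := by
  have hlim : Tendsto (fun n ↦ ∑ x, ∑ y, t x * t y * sampleMean n fun j ↦ a n j x * a n j y)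
      atTop (𝓝 (∑ x, ∑ y, t x * t y * V x y)) :=
    tendsto_finsetSum _ fun x _ ↦ tendsto_finsetSum _ fun y _ ↦
      (ha.tendsto_sampleMean_mul x y).const_mul _
  convert hlim using 2 with n
  · simp only [← sampleMean_const_mul, ← sampleMean_sum]
    rw [sampleMean, Finset.mul_sum]
    refine Finset.sum_congr rfl fun j _ ↦ ?_
    rw [sq, Finset.sum_mul_sum]
    simp only [Finset.mul_sum]
    refine Finset.sum_congr rfl fun x _ ↦ Finset.sum_congr rfl fun y _ ↦ ?_
    rw [mul_mul_mul_comm, div_mul_div_comm, Real.mul_self_sqrt n.cast_nonneg]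
    ring
  · simp only [dotProduct, mulVec, Finset.mul_sum]
    refine Finset.sum_congr rfl fun x _ ↦ Finset.sum_congr rfl fun y _ ↦ ?_
    ring

section RandomWeights

variable {Ω : Type*} [MeasurableSpace Ω] {μ : Measure Ω} [IsProbabilityMeasure μ]

theorem LindebergArray.tendstoInDistribution_gaussianPi {α : Type*} [Fintype α] [DecidableEq α]
    {a : ℕ → ℕ → α → ℝ} {V : Matrix α α ℝ} (ha : LindebergArray a V)
    (hV : V.PosSemidef) {w : ℕ → Ω → ℝ} (hindep : iIndepFun w μ)
    (hident : ∀ i, IdentDistrib (w i) (w 0) μ μ) (h0 : ∫ ω, w 0 ω ∂μ = 0)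
    (h1 : ∫ ω, w 0 ω ^ 2 ∂μ = 1) :
    MeasureTheory.TendstoInDistribution
      (fun (n : ℕ) ω x ↦ √n * sampleMean n fun j ↦ w j ω * a n j x) atTop id (fun _ ↦ μ)
      (gaussianPi V) := by
  have hwm (j : ℕ) : AEMeasurable (w j) μ := (hident j).aemeasurable_fst
  refine tendstoInDistribution_of_forall_dotProduct (fun n ↦ ?_) aemeasurable_id fun t ↦ ?_
  · unfold sampleMean
    fun_prop
  have hneg : IsNegligibleArray fun n j ↦ ∑ x, a n j x / √n * t x :=
    .sum _ fun x _ ↦ (ha.negligible x).mul_const (t x)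
  have hvar : Tendsto (fun n ↦ ∑ j ∈ Finset.range n, (∑ x, a n j x / √n * t x) ^ 2) atTop
      (𝓝 (t ⬝ᵥ V *ᵥ t).toNNReal) := by
    rw [Real.coe_toNNReal _ (by simpa using hV.dotProduct_mulVec_nonneg t)]
    exact ha.tendsto_sum_sq t
  convert tendstoInDistribution_sum_mul_gaussianReal hindep hident h0 h1 hneg hvar
    (hasLaw_dotProduct_gaussianPi hV t) using 3 with n ω
  · simp only [dotProduct, sqrt_mul_sampleMean, Finset.mul_sum, Finset.sum_mul]
    rw [Finset.sum_comm]
    exact Finset.sum_congr rfl fun j _ ↦ Finset.sum_congr rfl fun x _ ↦ by ring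
  · rfl

theorem tendstoInMeasure_sampleMean_mul_mul_zero {p q : ℕ → ℕ → ℝ} {σ τ : ℝ}
    (hp : IsNegligibleArray fun n j ↦ p n j / √n) (hq : IsNegligibleArray fun n j ↦ q n j / √n)
    (hp2 : Tendsto (fun n ↦ sampleMean n fun j ↦ p n j ^ 2) atTop (𝓝 σ))
    (hq2 : Tendsto (fun n ↦ sampleMean n fun j ↦ q n j ^ 2) atTop (𝓝 τ))
    {W : ℕ → Ω → ℝ} (hindep : iIndepFun W μ) (hident : ∀ i, IdentDistrib (W i) (W 0) μ μ)
    (hint : Integrable (W 0) μ) (h0 : ∫ ω, W 0 ω ∂μ = 0) :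
    TendstoInMeasure μ (fun n ω ↦ sampleMean n fun j ↦ W j ω * (p n j * q n j)) atTop
      fun _ ↦ 0 := by
  have hneg : IsNegligibleArray fun n j ↦ p n j / √n * (q n j / √n) := hp.mul hq
  have hbdd : IsBoundedUnder (· ≤ ·) atTop
      fun n ↦ ∑ j ∈ Finset.range n, |p n j / √n * (q n j / √n)| := by
    refine (hp2.add hq2).isBoundedUnder_le.mono_le (.of_forall fun n ↦ ?_)
    simp only [sampleMean, Finset.mul_sum, ← Finset.sum_add_distrib]
    refine Finset.sum_le_sum fun j _ ↦ ?_
    rw [div_mul_div_comm, Real.mul_self_sqrt n.cast_nonneg, abs_div, Nat.abs_cast,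
      div_eq_inv_mul, ← mul_add]
    gcongr
    rw [abs_mul]
    nlinarith [sq_nonneg (|p n j| - |q n j|), sq_abs (p n j), sq_abs (q n j)]
  convert tendstoInMeasure_sum_mul_zero hindep hident hint h0 hneg hbdd using 3 with n ω
  rw [sampleMean, Finset.mul_sum]
  refine Finset.sum_congr rfl fun j _ ↦ ?_
  rw [div_mul_div_comm, Real.mul_self_sqrt n.cast_nonneg]
  ring

section SecondMoments

variable {α : Type*} {a : ℕ → ℕ → α → ℝ} {V : Matrix α α ℝ} {w : ℕ → Ω → ℝ}

lemma LindebergArray.tendstoInMeasure_sampleMean_mul (ha : LindebergArray a V)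
    (hindep : iIndepFun w μ) (hident : ∀ i, IdentDistrib (w i) (w 0) μ μ)
    (hint : Integrable (w 0) μ) (h0 : ∫ ω, w 0 ω ∂μ = 0) (x : α) :
    TendstoInMeasure μ (fun n ω ↦ sampleMean n fun j ↦ w j ω * a n j x) atTop fun _ ↦ 0 := by
  have hone := LindebergArray.of_sequence (f := fun _ (_ : Unit) ↦ (1 : ℝ)) (V := 1)
    fun _ _ ↦ tendsto_const_nhds.congr' <| (eventually_ne_atTop 0).mono fun n hn ↦ by
      simp [sampleMean_const hn]
  simpa using tendstoInMeasure_sampleMean_mul_mul_zero (ha.negligible x) (hone.negligible ())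
    (ha.tendsto_sampleMean_sq x) (hone.tendsto_sampleMean_sq ()) hindep hident hint h0

lemma LindebergArray.tendstoInMeasure_sampleMean_mul_mul (ha : LindebergArray a V)
    (hindep : iIndepFun w μ) (hident : ∀ i, IdentDistrib (w i) (w 0) μ μ)
    (hint : Integrable (fun ω ↦ w 0 ω ^ 2) μ) (h1 : ∫ ω, w 0 ω ^ 2 ∂μ = 1) (x y : α) :
    TendstoInMeasure μ (fun n ω ↦ sampleMean n fun j ↦ w j ω * a n j x * (w j ω * a n j y)) atTop
      fun _ ↦ V x y := by
  have hwm (j : ℕ) : AEMeasurable (w j) μ := (hident j).aemeasurable_fst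
  have hg : Measurable fun s : ℝ ↦ s ^ 2 - 1 := by fun_prop
  have hnull := tendstoInMeasure_sampleMean_mul_mul_zero (W := fun j ω ↦ w j ω ^ 2 - 1)
    (ha.negligible x) (ha.negligible y) (ha.tendsto_sampleMean_sq x) (ha.tendsto_sampleMean_sq y)
    (hindep.comp (fun _ s ↦ s ^ 2 - 1) fun _ ↦ hg) (fun i ↦ (hident i).comp hg)
    (hint.sub (integrable_const 1)) (by simp [integral_sub hint (integrable_const 1), h1])
  have hdet : TendstoInMeasure μ (fun n _ ↦ sampleMean n fun j ↦ a n j x * a n j y) atTop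
      fun _ ↦ V x y :=
    tendstoInMeasure_of_tendsto_ae (fun _ ↦ aestronglyMeasurable_const)
      (.of_forall fun _ ↦ ha.tendsto_sampleMean_mul x y)
  have hsum := tendstoInMeasure_continuous_comp_prodMk hnull hdet
    (fun n ↦ by unfold sampleMean; fun_prop) (fun _ ↦ aemeasurable_const) continuous_add
  simp only [← sampleMean_add, zero_add] at hsum
  convert hsum using 5 with n ω j
  ring

theorem LindebergArray.tendstoInMeasure_sampleCov (ha : LindebergArray a V)
    (hindep : iIndepFun w μ) (hident : ∀ i, IdentDistrib (w i) (w 0) μ μ) (hL2 : MemLp (w 0) 2 μ)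
    (h0 : ∫ ω, w 0 ω ∂μ = 0) (h1 : ∫ ω, w 0 ω ^ 2 ∂μ = 1) (x y : α) :
    TendstoInMeasure μ (fun n ω ↦ sampleCov n (fun j ↦ w j ω * a n j x) fun j ↦ w j ω * a n j y)
      atTop fun _ ↦ V x y := by
  have hwm (j : ℕ) : AEMeasurable (w j) μ := (hident j).aemeasurable_fst
  have hmean (x : α) := ha.tendstoInMeasure_sampleMean_mul hindep hident
    (hL2.integrable one_le_two) h0 x
  have hmean_meas (x : α) (n : ℕ) :
      AEMeasurable (fun ω ↦ sampleMean n fun j ↦ w j ω * a n j x) μ := by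
    unfold sampleMean
    fun_prop
  have hprod := tendstoInMeasure_continuous_comp_prodMk (hmean x) (hmean y) (hmean_meas x)
    (hmean_meas y) continuous_mul
  simpa only [sampleCov_eq_sub, zero_mul, sub_zero] using
    tendstoInMeasure_continuous_comp_prodMk
      (ha.tendstoInMeasure_sampleMean_mul_mul hindep hident hL2.integrable_sq h1 x y) hprod
      (fun n ↦ by unfold sampleMean; fun_prop)
      (fun n ↦ (hmean_meas x n).mul (hmean_meas y n)) continuous_sub

end SecondMoments

end RandomWeights

/-! ### Empirical covariances of i.i.d. vectors -/

section CentralLimitTheorem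

variable {Ω α : Type*} [MeasurableSpace Ω] {μ : Measure Ω}

variable (μ) in
/-- The covariance matrix of the random vector `F`. -/
def covMatrix (F : Ω → α → ℝ) : Matrix α α ℝ := .of fun x y ↦ cov[(F · x), (F · y); μ]

lemma variance_dotProduct [Fintype α] [IsFiniteMeasure μ] {F : Ω → α → ℝ}
    (hF : ∀ x, MemLp (F · x) 2 μ) (t : α → ℝ) :
    Var[fun ω ↦ t ⬝ᵥ F ω; μ] = t ⬝ᵥ covMatrix μ F *ᵥ t := by
  simp only [dotProduct]
  rw [variance_fun_sum fun x ↦ (hF x).const_mul (t x)]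
  simp only [covariance_const_mul_left, covariance_const_mul_right, mulVec, dotProduct,
    covMatrix, Matrix.of_apply, Finset.mul_sum]
  refine Finset.sum_congr rfl fun x _ ↦ Finset.sum_congr rfl fun y _ ↦ ?_
  ring

lemma posSemidef_covMatrix [Finite α] [IsFiniteMeasure μ] {F : Ω → α → ℝ}
    (hF : ∀ x, MemLp (F · x) 2 μ) : (covMatrix μ F).PosSemidef := by
  have := Fintype.ofFinite α
  refine .of_dotProduct_mulVec_nonneg ?_ fun t ↦ ?_
  · ext x y
    exact covariance_comm _ _
  · rw [star_trivial, ← variance_dotProduct hF]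
    exact variance_nonneg _ _

theorem ae_tendsto_sampleMean {S : Type*} [MeasurableSpace S] {Z : ℕ → Ω → S}
    (hindep : iIndepFun Z μ) (hident : ∀ i, IdentDistrib (Z i) (Z 0) μ μ) {g : S → ℝ}
    (hg : Measurable g) (hint : Integrable (fun ω ↦ g (Z 0 ω)) μ) :
    ∀ᵐ ω ∂μ, Tendsto (fun n ↦ sampleMean n fun j ↦ g (Z j ω)) atTop
      (𝓝 (∫ ω, g (Z 0 ω) ∂μ)) := by
  simpa only [sampleMean, ← div_eq_inv_mul] using
    strong_law_ae_real (fun j ω ↦ g (Z j ω)) hint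
      (fun i j hij ↦ (hindep.comp (fun _ ↦ g) fun _ ↦ hg).indepFun hij)
      fun i ↦ (hident i).comp hg

variable [IsProbabilityMeasure μ]

theorem tendstoInDistribution_sqrt_mul_sampleMean_sub [Fintype α] [DecidableEq α]
    {F : ℕ → Ω → α → ℝ} (hindep : iIndepFun F μ) (hident : ∀ i, IdentDistrib (F i) (F 0) μ μ)
    (hF : ∀ x, MemLp (F 0 · x) 2 μ) :
    MeasureTheory.TendstoInDistribution
      (fun (n : ℕ) ω x ↦ √n * (sampleMean n (F · ω x) - ∫ ω, F 0 ω x ∂μ)) atTop id (fun _ ↦ μ)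
      (gaussianPi (covMatrix μ (F 0))) := by
  have hFm (j : ℕ) (x : α) : AEMeasurable (F j · x) μ :=
    (measurable_pi_apply x).comp_aemeasurable (hident j).aemeasurable_fst
  refine tendstoInDistribution_of_forall_dotProduct (fun n ↦ ?_) aemeasurable_id fun t ↦ ?_
  · unfold sampleMean
    fun_prop
  have hdot : Measurable fun z : α → ℝ ↦ t ⬝ᵥ z := by
    unfold dotProduct
    fun_prop
  have hlaw := hasLaw_dotProduct_gaussianPi (posSemidef_covMatrix hF) t
  rw [← variance_dotProduct hF t] at hlaw
  convert tendstoInDistribution_inv_sqrt_mul_sum_sub (X := fun j ω ↦ t ⬝ᵥ F j ω) hlaw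
    (memLp_finsetSum _ fun x _ ↦ (hF x).const_mul (t x))
    (hindep.comp (fun _ z ↦ t ⬝ᵥ z) fun _ ↦ hdot) (fun i ↦ (hident i).comp hdot) using 3 with n ω
  · simp only [sqrt_mul_sampleMean_sub, dotProduct]
    rw [integral_finsetSum _ fun x _ ↦ ((hF x).integrable one_le_two).const_mul (t x)]
    simp only [integral_const_mul, Finset.mul_sum, mul_sub, Finset.sum_sub_distrib]
    congr 1
    · rw [Finset.sum_comm]
      exact Finset.sum_congr rfl fun j _ ↦ Finset.sum_congr rfl fun x _ ↦ by ring
    · exact Finset.sum_congr rfl fun x _ ↦ by ring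
  · rfl

-- One factor is of order `1 / √n` by the central limit theorem, the other tends to `0`.
lemma tendstoInMeasure_sqrt_mul_sampleMean_sub_mul {U W : ℕ → Ω → ℝ} (hU : iIndepFun U μ)
    (hUident : ∀ i, IdentDistrib (U i) (U 0) μ μ) (hUL2 : MemLp (U 0) 2 μ)
    (hW : iIndepFun W μ) (hWident : ∀ i, IdentDistrib (W i) (W 0) μ μ)
    (hWint : Integrable (W 0) μ) :
    TendstoInMeasure μ (fun (n : ℕ) ω ↦ √n * ((sampleMean n (U · ω) - ∫ ω, U 0 ω ∂μ) *
      (sampleMean n (W · ω) - ∫ ω, W 0 ω ∂μ))) atTop fun _ ↦ 0 := by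
  have hWm (j : ℕ) : AEMeasurable (W j) μ := (hWident j).aemeasurable_fst
  have hWmean (n : ℕ) : AEMeasurable (fun ω ↦ sampleMean n (W · ω) - ∫ ω, W 0 ω ∂μ) μ := by
    unfold sampleMean
    fun_prop
  have hclt := tendstoInDistribution_inv_sqrt_mul_sum_sub
    (Y := id) (P' := gaussianReal 0 Var[U 0; μ].toNNReal) .id hUL2 hU hUident
  simp only [← sqrt_mul_sampleMean_sub] at hclt
  have hlln : TendstoInMeasure μ (fun n ω ↦ sampleMean n (W · ω) - ∫ ω, W 0 ω ∂μ) atTop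
      fun _ ↦ 0 :=
    tendstoInMeasure_of_tendsto_ae (fun n ↦ (hWmean n).aestronglyMeasurable) <|
      (ae_tendsto_sampleMean hW hWident measurable_id hWint).mono fun ω hω ↦ by
        simpa using hω.sub_const (∫ ω, W 0 ω ∂μ)
  refine tendstoInMeasure_of_tendstoInDistribution_const
    (Ω' := ℝ) (μ' := gaussianReal 0 Var[U 0; μ].toNNReal) ?_
  simpa only [mul_assoc, mul_zero] using
    hclt.continuous_comp_prodMk_of_tendstoInMeasure_const continuous_mul hlln hWmean

end CentralLimitTheorem

section Covariance

variable {Ω α : Type*} [MeasurableSpace Ω] {μ : Measure Ω} {A B : ℕ → Ω → α → ℝ}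

variable (μ A B) in
/-- The product of the centered coordinates `x` of the `j`-th observation of two random vectors,
whose expectation is the covariance of these coordinates. The expectations are those of the
observation `0`, all observations being meant to have the same law. -/
def covProduct (j : ℕ) (ω : Ω) (x : α) : ℝ :=
  (A j ω x - ∫ ω, A 0 ω x ∂μ) * (B j ω x - ∫ ω, B 0 ω x ∂μ)

variable [IsProbabilityMeasure μ]

theorem tendstoInDistribution_sqrt_mul_sampleCov_sub [Fintype α] [DecidableEq α]
    (hindep : iIndepFun (fun j ω ↦ (A j ω, B j ω)) μ)
    (hident : ∀ i, IdentDistrib (fun ω ↦ (A i ω, B i ω)) (fun ω ↦ (A 0 ω, B 0 ω)) μ μ)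
    (hA : ∀ x, MemLp (A 0 · x) 2 μ) (hB : ∀ x, Integrable (B 0 · x) μ)
    (hK : ∀ x, MemLp (covProduct μ A B 0 · x) 2 μ) :
    MeasureTheory.TendstoInDistribution (fun (n : ℕ) ω x ↦
      √n * (sampleCov n (A · ω x) (B · ω x) - cov[(A 0 · x), (B 0 · x); μ])) atTop id (fun _ ↦ μ)
      (gaussianPi (covMatrix μ (covProduct μ A B 0))) := by
  have hkm : Measurable fun (z : (α → ℝ) × (α → ℝ)) x ↦
      (z.1 x - ∫ ω, A 0 ω x ∂μ) * (z.2 x - ∫ ω, B 0 ω x ∂μ) := by fun_prop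
  have hclt := tendstoInDistribution_sqrt_mul_sampleMean_sub (F := covProduct μ A B)
    (hindep.comp (fun _ ↦ _) fun _ ↦ hkm) (fun i ↦ (hident i).comp hkm) hK
  have hAm (x : α) : Measurable fun z : (α → ℝ) × (α → ℝ) ↦ z.1 x := by fun_prop
  have hBm (x : α) : Measurable fun z : (α → ℝ) × (α → ℝ) ↦ z.2 x := by fun_prop
  have hrem := tendstoInMeasure_pi (Z := fun _ _ ↦ 0) fun x ↦
    tendstoInMeasure_sqrt_mul_sampleMean_sub_mul (U := fun j ω ↦ A j ω x) (W := fun j ω ↦ B j ω x)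
      (hindep.comp (fun _ ↦ _) fun _ ↦ hAm x) (fun i ↦ (hident i).comp (hAm x)) (hA x)
      (hindep.comp (fun _ ↦ _) fun _ ↦ hBm x) (fun i ↦ (hident i).comp (hBm x)) (hB x)
  have hAmeas (j : ℕ) (x : α) : AEMeasurable (A j · x) μ :=
    (hAm x).comp_aemeasurable (hident j).aemeasurable_fst
  have hBmeas (j : ℕ) (x : α) : AEMeasurable (B j · x) μ :=
    (hBm x).comp_aemeasurable (hident j).aemeasurable_fst
  have hslutsky := hclt.continuous_comp_prodMk_of_tendstoInMeasure_const continuous_sub hrem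
    fun n ↦ by unfold sampleMean; fun_prop
  have hid : (fun z : α → ℝ ↦ id z - fun _ ↦ 0) = id := _root_.funext sub_zero
  rw [hid] at hslutsky
  simp only [fun (n : ℕ) ω x ↦ sqrt_mul_sampleCov_sub n (A · ω x) (B · ω x)
    (∫ ω, A 0 ω x ∂μ) (∫ ω, B 0 ω x ∂μ)]
  exact hslutsky

theorem ae_lindebergArray_centeredProduct_sub_sampleCov [Countable α]
    (hindep : iIndepFun (fun j ω ↦ (A j ω, B j ω)) μ)
    (hident : ∀ i, IdentDistrib (fun ω ↦ (A i ω, B i ω)) (fun ω ↦ (A 0 ω, B 0 ω)) μ μ)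
    (hA : ∀ x, MemLp (A 0 · x) 2 μ) (hB : ∀ x, MemLp (B 0 · x) 2 μ)
    (hK : ∀ x, MemLp (covProduct μ A B 0 · x) 2 μ) :
    ∀ᵐ ω ∂μ, LindebergArray (fun n j x ↦ centeredProduct n (A · ω x) (B · ω x) j -
      sampleCov n (A · ω x) (B · ω x)) (covMatrix μ (covProduct μ A B 0)) := by
  let k (x : α) (z : (α → ℝ) × (α → ℝ)) : ℝ :=
    (z.1 x - ∫ ω, A 0 ω x ∂μ) * (z.2 x - ∫ ω, B 0 ω x ∂μ)
  let c (x : α) : ℝ := ∫ ω, covProduct μ A B 0 ω x ∂μ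
  have hmeanA := ae_all_iff.2 fun x ↦ ae_tendsto_sampleMean hindep hident
    (g := fun z ↦ z.1 x) (by fun_prop) ((hA x).integrable one_le_two)
  have hmeanB := ae_all_iff.2 fun x ↦ ae_tendsto_sampleMean hindep hident
    (g := fun z ↦ z.2 x) (by fun_prop) ((hB x).integrable one_le_two)
  have hsqA := ae_all_iff.2 fun x ↦ ae_tendsto_sampleMean hindep hident
    (g := fun z ↦ (z.1 x - ∫ ω, A 0 ω x ∂μ) ^ 2) (by fun_prop)
    ((hA x).sub (memLp_const _)).integrable_sq
  have hsqB := ae_all_iff.2 fun x ↦ ae_tendsto_sampleMean hindep hident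
    (g := fun z ↦ (z.2 x - ∫ ω, B 0 ω x ∂μ) ^ 2) (by fun_prop)
    ((hB x).sub (memLp_const _)).integrable_sq
  have hmeanK := ae_all_iff.2 fun x ↦ ae_tendsto_sampleMean hindep hident
    (g := k x) (by fun_prop) ((hK x).integrable one_le_two)
  have hcovK := ae_all_iff.2 fun x ↦ ae_all_iff.2 fun y ↦ ae_tendsto_sampleMean hindep hident
    (g := fun z ↦ (k x z - c x) * (k y z - c y)) (by fun_prop)
    (((hK x).sub (memLp_const _)).integrable_mul ((hK y).sub (memLp_const _)))
  filter_upwards [hmeanA, hmeanB, hsqA, hsqB, hmeanK, hcovK] with ω hA hB hA2 hB2 hK hV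
  exact .centeredProduct_sub_sampleCov hA hB hA2 hB2 hK hV

end Covariance

/-! ### The weighted bootstrap -/

lemma integrable_of_nonneg_of_integrable_sq {Ω : Type*} [MeasurableSpace Ω] {μ : Measure Ω}
    [IsFiniteMeasure μ] {f : Ω → ℝ} (hf : ∀ ω, 0 ≤ f ω) (hf2 : Integrable (fun ω ↦ f ω ^ 2) μ) :
    Integrable f μ := by
  have hmeas : AEStronglyMeasurable f μ := by
    simpa only [Function.comp_def, Real.sqrt_sq (hf _)] using
      Real.continuous_sqrt.comp_aestronglyMeasurable hf2.aestronglyMeasurable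
  exact ((memLp_two_iff_integrable_sq hmeas).2 hf2).integrable one_le_two

lemma memLp_two_of_integrable_sum_sq {Ω ι : Type*} [MeasurableSpace Ω] {μ : Measure Ω} [Fintype ι]
    {F : Ω → ι → ℝ} (hmeas : AEMeasurable F μ)
    (hF : Integrable (fun ω ↦ ∑ i, F ω i ^ 2) μ) (i : ι) : MemLp (F · i) 2 μ := by
  have hmeas_i : AEStronglyMeasurable (F · i) μ :=
    (aemeasurable_pi_iff.1 hmeas i).aestronglyMeasurable
  refine (memLp_two_iff_integrable_sq hmeas_i).2 (hF.mono' (hmeas_i.pow 2) ?_)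
  refine .of_forall fun ω ↦ ?_
  rw [Real.norm_of_nonneg (sq_nonneg _)]
  exact Finset.single_le_sum (f := fun i ↦ F ω i ^ 2) (fun _ _ ↦ sq_nonneg _) (Finset.mem_univ i)

section WeightedBootstrap

variable {Ω Ω' α : Type*} [MeasurableSpace Ω] [MeasurableSpace Ω'] [Fintype α]
  {μ : Measure Ω} [IsProbabilityMeasure μ] {ν : Measure Ω'} [IsProbabilityMeasure ν]
  {A B : ℕ → Ω → α → ℝ} {w : ℕ → Ω' → ℝ}

theorem ae_tendstoInDistribution_sqrt_mul_sampleMean_weighted [DecidableEq α]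
    (hindep : iIndepFun (fun j ω ↦ (A j ω, B j ω)) μ)
    (hident : ∀ i, IdentDistrib (fun ω ↦ (A i ω, B i ω)) (fun ω ↦ (A 0 ω, B 0 ω)) μ μ)
    (hA : ∀ x, MemLp (A 0 · x) 2 μ) (hB : ∀ x, MemLp (B 0 · x) 2 μ)
    (hK : ∀ x, MemLp (covProduct μ A B 0 · x) 2 μ)
    (hwindep : iIndepFun w ν) (hwident : ∀ i, IdentDistrib (w i) (w 0) ν ν)
    (hwmean : ∫ ω, w 0 ω ∂ν = 0) (hwvar : ∫ ω, w 0 ω ^ 2 ∂ν = 1) :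
    ∀ᵐ ω ∂μ, MeasureTheory.TendstoInDistribution
      (fun (n : ℕ) ω' x ↦ √n * sampleMean n fun j ↦
        w j ω' * (centeredProduct n (A · ω x) (B · ω x) j - sampleCov n (A · ω x) (B · ω x)))
      atTop id (fun _ ↦ ν) (gaussianPi (covMatrix μ (covProduct μ A B 0))) := by
  filter_upwards [ae_lindebergArray_centeredProduct_sub_sampleCov hindep hident hA hB hK]
    with ω harray
  exact harray.tendstoInDistribution_gaussianPi (posSemidef_covMatrix hK) hwindep hwident hwmean
    hwvar

theorem ae_tendstoInMeasure_sampleCov_weighted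
    (hindep : iIndepFun (fun j ω ↦ (A j ω, B j ω)) μ)
    (hident : ∀ i, IdentDistrib (fun ω ↦ (A i ω, B i ω)) (fun ω ↦ (A 0 ω, B 0 ω)) μ μ)
    (hA : ∀ x, MemLp (A 0 · x) 2 μ) (hB : ∀ x, MemLp (B 0 · x) 2 μ)
    (hK : ∀ x, MemLp (covProduct μ A B 0 · x) 2 μ)
    (hwindep : iIndepFun w ν) (hwident : ∀ i, IdentDistrib (w i) (w 0) ν ν)
    (hwmean : ∫ ω, w 0 ω ∂ν = 0) (hwvar : ∫ ω, w 0 ω ^ 2 ∂ν = 1) :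
    ∀ᵐ ω ∂μ, TendstoInMeasure ν
      (fun (n : ℕ) ω' x y ↦ sampleCov n
        (fun j ↦ w j ω' *
          (centeredProduct n (A · ω x) (B · ω x) j - sampleCov n (A · ω x) (B · ω x)))
        (fun j ↦ w j ω' *
          (centeredProduct n (A · ω y) (B · ω y) j - sampleCov n (A · ω y) (B · ω y))))
      atTop fun _ ↦ covMatrix μ (covProduct μ A B 0) := by
  have hwL2 : MemLp (w 0) 2 ν :=
    (memLp_two_iff_integrable_sq (hwident 0).aemeasurable_fst.aestronglyMeasurable).2
      (.of_integral_ne_zero (hwvar ▸ one_ne_zero))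
  filter_upwards [ae_lindebergArray_centeredProduct_sub_sampleCov hindep hident hA hB hK]
    with ω harray
  exact tendstoInMeasure_pi fun x ↦ tendstoInMeasure_pi fun y ↦
    harray.tendstoInMeasure_sampleCov hwindep hwident hwL2 hwmean hwvar x y

end WeightedBootstrap

theorem stmt_14_general {ι κ S Ω Ω' : Type*} [Fintype ι] [DecidableEq ι] [Fintype κ]
    [DecidableEq κ] [MeasurableSpace S] [MeasurableSpace Ω] [MeasurableSpace Ω']
    (μ : Measure Ω) [IsProbabilityMeasure μ]
    (ν : Measure Ω') [IsProbabilityMeasure ν]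
    (X : ℕ → Ω → ι → ℝ) (Y : ℕ → Ω → S)
    (hindep : iIndepFun (fun i ω ↦ (X i ω, Y i ω)) μ)
    (hident : ∀ i, IdentDistrib (fun ω ↦ (X i ω, Y i ω)) (fun ω ↦ (X 0 ω, Y 0 ω)) μ μ)
    (Ψ : S → κ → ℝ) (hΨ : Measurable Ψ)
    (w : ℕ → Ω' → ℝ)
    (hwindep : iIndepFun w ν)
    (hwident : ∀ i, IdentDistrib (w i) (w 0) ν ν)
    (hwmean : ∫ ω', w 0 ω' ∂ν = 0) (hwvar : ∫ ω', (w 0 ω') ^ 2 ∂ν = 1)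
    (EX : ι → ℝ) (hEX : ∀ i, EX i = ∫ ω, X 0 ω i ∂μ)
    (EΨ : κ → ℝ) (hEΨ : ∀ h, EΨ h = ∫ ω, Ψ (Y 0 ω) h ∂μ)
    (K : Ω → ι → κ → ℝ)
    (hK : ∀ ω i h, K ω i h = (X 0 ω i - EX i) * (Ψ (Y 0 ω) h - EΨ h))
    (C : ι → κ → ℝ) (hC : ∀ i h, C i h = ∫ ω, K ω i h ∂μ)
    (hX2 : Integrable (fun ω ↦ ∑ i, (X 0 ω i) ^ 2) μ)
    (hΨ2 : Integrable (fun ω ↦ ∑ h, (Ψ (Y 0 ω) h) ^ 2) μ)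
    (hK2 : Integrable (fun ω ↦ ∑ i, ∑ h, (K ω i h) ^ 2) μ)
    (Khat : ℕ → ℕ → Ω → ι → κ → ℝ)
    (hKhat : ∀ n j ω i h, Khat n j ω i h =
      (X j ω i - (n : ℝ)⁻¹ * ∑ k ∈ Finset.range n, X k ω i) *
        (Ψ (Y j ω) h - (n : ℝ)⁻¹ * ∑ k ∈ Finset.range n, Ψ (Y k ω) h))
    (Chat : ℕ → Ω → ι → κ → ℝ)
    (hChat : ∀ n ω i h, Chat n ω i h = (n : ℝ)⁻¹ * ∑ j ∈ Finset.range n, Khat n j ω i h)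
    (Kstar : ℕ → ℕ → Ω → Ω' → ι → κ → ℝ)
    (hKstar : ∀ n j ω ω' i h,
      Kstar n j ω ω' i h = w j ω' * (Khat n j ω i h - Chat n ω i h))
    (Kbarstar : ℕ → Ω → Ω' → ι → κ → ℝ)
    (hKbarstar : ∀ n ω ω' i h,
      Kbarstar n ω ω' i h = (n : ℝ)⁻¹ * ∑ j ∈ Finset.range n, Kstar n j ω ω' i h)
    (V : κ × ι → κ × ι → ℝ)
    (hV : ∀ a b, V a b = ∫ ω, (K ω a.2 a.1 - C a.2 a.1) * (K ω b.2 b.1 - C b.2 b.1) ∂μ)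
    (Vstar : ℕ → Ω → Ω' → κ × ι → κ × ι → ℝ)
    (hVstar : ∀ n ω ω' a b, Vstar n ω ω' a b = (n : ℝ)⁻¹ * ∑ j ∈ Finset.range n,
      (Kstar n j ω ω' a.2 a.1 - Kbarstar n ω ω' a.2 a.1) *
        (Kstar n j ω ω' b.2 b.1 - Kbarstar n ω ω' b.2 b.1)) :
    TendstoInDistribution μ
      (fun n ω ↦ fun a : κ × ι ↦ √n * (Chat n ω a.2 a.1 - C a.2 a.1))
      (gaussianPi (Matrix.of V)) ∧
    (∀ᵐ ω ∂μ, TendstoInDistribution ν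
      (fun n ω' ↦ fun a : κ × ι ↦ √n * Kbarstar n ω ω' a.2 a.1)
      (gaussianPi (Matrix.of V))) ∧
    (∀ᵐ ω ∂μ, TendstoInProbability ν (fun n ω' ↦ Vstar n ω ω') V) := by
  let A (j : ℕ) (ω : Ω) (a : κ × ι) : ℝ := X j ω a.2
  let B (j : ℕ) (ω : Ω) (a : κ × ι) : ℝ := Ψ (Y j ω) a.1
  have hpair : Measurable fun (z : (ι → ℝ) × S) ↦
      ((fun a : κ × ι ↦ z.1 a.2), fun a : κ × ι ↦ Ψ z.2 a.1) := by fun_prop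
  have hAB : iIndepFun (fun j ω ↦ (A j ω, B j ω)) μ := hindep.comp (fun _ ↦ _) fun _ ↦ hpair
  have hABident (i : ℕ) := (hident i).comp hpair
  have hKA (ω : Ω) (a : κ × ι) : K ω a.2 a.1 = covProduct μ A B 0 ω a := by
    simp only [hK, hEX, hEΨ, covProduct, A, B]
  have hA (a : κ × ι) : MemLp (A 0 · a) 2 μ :=
    memLp_two_of_integrable_sum_sq (hident 0).aemeasurable_fst.fst hX2 a.2
  have hB (a : κ × ι) : MemLp (B 0 · a) 2 μ :=
    memLp_two_of_integrable_sum_sq (hΨ.comp_aemeasurable (hident 0).aemeasurable_fst.snd) hΨ2 a.1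
  have hKm : AEMeasurable (covProduct μ A B 0) μ := aemeasurable_pi_iff.2 fun a ↦
    ((hA a).aemeasurable.sub_const _).mul ((hB a).aemeasurable.sub_const _)
  have hKL2 : ∀ a, MemLp (covProduct μ A B 0 · a) 2 μ := memLp_two_of_integrable_sum_sq hKm <| by
    simpa only [← hKA, Fintype.sum_prod_type_right] using hK2
  have hVcov : Matrix.of V = covMatrix μ (covProduct μ A B 0) := by
    ext a b
    simp only [Matrix.of_apply, hV, hC, hKA, covMatrix, covariance]
  have hCcov (a : κ × ι) : C a.2 a.1 = cov[(A 0 · a), (B 0 · a); μ] := by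
    simp only [hC, hKA, covProduct, covariance]
  have hKhat' (n j : ℕ) (ω : Ω) (a : κ × ι) :
      Khat n j ω a.2 a.1 = centeredProduct n (A · ω a) (B · ω a) j := hKhat n j ω a.2 a.1
  have hChat' (n : ℕ) (ω : Ω) (a : κ × ι) :
      Chat n ω a.2 a.1 = sampleCov n (A · ω a) (B · ω a) := by
    simp only [hChat, hKhat']
    rfl
  refine ⟨?_, ?_, ?_⟩
  · simp only [hChat', hCcov, hVcov]
    exact tendstoInDistribution_of_map (tendstoInDistribution_sqrt_mul_sampleCov_sub hAB hABident
      hA (fun x ↦ (hB x).integrable one_le_two) hKL2)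
  · filter_upwards [ae_tendstoInDistribution_sqrt_mul_sampleMean_weighted hAB hABident hA hB hKL2
      hwindep hwident hwmean hwvar] with ω hω
    simp only [hKbarstar, hKstar, hKhat', hChat', hVcov]
    exact tendstoInDistribution_of_map hω
  · filter_upwards [ae_tendstoInMeasure_sampleCov_weighted hAB hABident hA hB hKL2
      hwindep hwident hwmean hwvar] with ω hω
    rw [show V = covMatrix μ (covProduct μ A B 0) from hVcov]
    refine tendstoInProbability_of_tendstoInMeasure (hω.congr_left fun n ↦ .of_forall fun ω' ↦ ?_)
    ext a b
    simp only [hVstar, hKbarstar, hKstar, hKhat', hChat']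
    rfl

/-- Proposition 8, weighted bootstrap for SIR: for i.i.d. data `(Xᵢ, Yᵢ)` with
the stated moment conditions and i.i.d. weights `(wᵢ)` of mean `0` and variance `1`, almost
surely the conditional law of `n^{1/2} K̄*` given the data converges weakly to the asymptotic
law `N(0, V)` of `n^{1/2}(Ĉ − C)`, and `V* → V` in probability conditionally a.s. -/
theorem stmt_14 {pd Hd : ℕ} {Ω Ω' : Type*} [MeasurableSpace Ω] [MeasurableSpace Ω']
    (μ : Measure Ω) [IsProbabilityMeasure μ]
    (ν : Measure Ω') [IsProbabilityMeasure ν]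
    (X : ℕ → Ω → Fin pd → ℝ) (Y : ℕ → Ω → ℝ)
    (hXY : ∀ i, Measurable (fun ω => (X i ω, Y i ω)))
    (hindep : iIndepFun (fun i ω => (X i ω, Y i ω)) μ)
    (hident : ∀ i, IdentDistrib (fun ω => (X i ω, Y i ω)) (fun ω => (X 0 ω, Y 0 ω)) μ μ)
    (Ψ : ℝ → Fin Hd → ℝ) (hΨ : Measurable Ψ)
    -- i.i.d. weights with mean 0 and variance 1, carried by the bootstrap space
    (w : ℕ → Ω' → ℝ) (hw : ∀ i, Measurable (w i))
    (hwindep : iIndepFun w ν)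
    (hwident : ∀ i, IdentDistrib (w i) (w 0) ν ν)
    (hwint : Integrable (fun ω' => (w 0 ω') ^ 2) ν)
    (hwmean : ∫ ω', w 0 ω' ∂ν = 0) (hwvar : ∫ ω', (w 0 ω') ^ 2 ∂ν = 1)
    -- population quantities
    (EX : Fin pd → ℝ) (hEX : ∀ i, EX i = ∫ ω, X 0 ω i ∂μ)
    (EΨ : Fin Hd → ℝ) (hEΨ : ∀ h, EΨ h = ∫ ω, Ψ (Y 0 ω) h ∂μ)
    (K : Ω → Fin pd → Fin Hd → ℝ)
    (hK : ∀ ω i h, K ω i h = (X 0 ω i - EX i) * (Ψ (Y 0 ω) h - EΨ h))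
    (C : Fin pd → Fin Hd → ℝ) (hC : ∀ i h, C i h = ∫ ω, K ω i h ∂μ)
    -- moment conditions: E‖X‖² < ∞, E‖Ψ(Y)‖² < ∞, E‖K‖_F⁴ < ∞
    (hX2 : Integrable (fun ω => ∑ i, (X 0 ω i) ^ 2) μ)
    (hΨ2 : Integrable (fun ω => ∑ h, (Ψ (Y 0 ω) h) ^ 2) μ)
    (hK4 : Integrable (fun ω => (∑ i, ∑ h, (K ω i h) ^ 2) ^ 2) μ)
    -- empirical quantities
    (Khat : ℕ → ℕ → Ω → Fin pd → Fin Hd → ℝ)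
    (hKhat : ∀ n j ω i h, Khat n j ω i h =
      (X j ω i - (n : ℝ)⁻¹ * ∑ k ∈ Finset.range n, X k ω i) *
        (Ψ (Y j ω) h - (n : ℝ)⁻¹ * ∑ k ∈ Finset.range n, Ψ (Y k ω) h))
    (Chat : ℕ → Ω → Fin pd → Fin Hd → ℝ)
    (hChat : ∀ n ω i h, Chat n ω i h = (n : ℝ)⁻¹ * ∑ j ∈ Finset.range n, Khat n j ω i h)
    -- bootstrap quantities
    (Kstar : ℕ → ℕ → Ω → Ω' → Fin pd → Fin Hd → ℝ)
    (hKstar : ∀ n j ω ω' i h,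
      Kstar n j ω ω' i h = w j ω' * (Khat n j ω i h - Chat n ω i h))
    (Kbarstar : ℕ → Ω → Ω' → Fin pd → Fin Hd → ℝ)
    (hKbarstar : ∀ n ω ω' i h,
      Kbarstar n ω ω' i h = (n : ℝ)⁻¹ * ∑ j ∈ Finset.range n, Kstar n j ω ω' i h)
    -- V = Var(vec K) and its bootstrap counterpart V*
    (V : Fin Hd × Fin pd → Fin Hd × Fin pd → ℝ)
    (hV : ∀ a b, V a b = ∫ ω, (K ω a.2 a.1 - C a.2 a.1) * (K ω b.2 b.1 - C b.2 b.1) ∂μ)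
    (Vstar : ℕ → Ω → Ω' → Fin Hd × Fin pd → Fin Hd × Fin pd → ℝ)
    (hVstar : ∀ n ω ω' a b, Vstar n ω ω' a b = (n : ℝ)⁻¹ * ∑ j ∈ Finset.range n,
      (Kstar n j ω ω' a.2 a.1 - Kbarstar n ω ω' a.2 a.1) *
        (Kstar n j ω ω' b.2 b.1 - Kbarstar n ω ω' b.2 b.1)) :
    TendstoInDistribution μ
      (fun n ω => fun a : Fin Hd × Fin pd => Real.sqrt n * (Chat n ω a.2 a.1 - C a.2 a.1))
      (gaussianPi (Matrix.of V)) ∧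
    (∀ᵐ ω ∂μ, TendstoInDistribution ν
      (fun n ω' => fun a : Fin Hd × Fin pd => Real.sqrt n * Kbarstar n ω ω' a.2 a.1)
      (gaussianPi (Matrix.of V))) ∧
    (∀ᵐ ω ∂μ, TendstoInProbability ν (fun n ω' => Vstar n ω ω') V) := by
  exact stmt_14_general μ ν X Y hindep hident Ψ hΨ w hwindep hwident hwmean hwvar
    EX hEX EΨ hEΨ K hK C hC hX2 hΨ2
    (integrable_of_nonneg_of_integrable_sq (fun _ ↦ by positivity) hK4)
    Khat hKhat Chat hChat Kstar hKstar Kbarstar hKbarstar V hV Vstar hVstar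

end
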